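/- Let X be a Tychonoff space and λ ∈ Ψ. The space C_λ(X) has countable fan tightness if and only if X has property S_fin(Λ(λ), Λ(λ)). -/

import Mathlib

open Set Filter Topology TopologicalSpace ContinuousMap

/-- A subset `A` of `X` is *C-compact* if `f '' A` is compact in `ℝ` for every
continuous real-valued function `f` on `X`. -/
def IsCCompact {X : Type*} [TopologicalSpace X] (A : Set X) : Prop :=
  ∀ f : C(X, ℝ), IsCompact (f '' A)

/-- The `λ`-open (set-open) topology on `C(X, ℝ)`, generated by the subbasic sets
`[F, U] = {f : f '' F ⊆ U}` for `F ∈ lam` and `U ⊆ ℝ` open. -/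
def setOpenTopology {X : Type*} [TopologicalSpace X] (lam : Set (Set X)) :
    TopologicalSpace C(X, ℝ) :=
  TopologicalSpace.generateFrom
    {S | ∃ F ∈ lam, ∃ U : Set ℝ, IsOpen U ∧ S = {f : C(X, ℝ) | f '' F ⊆ U}}

/-- Membership in the collection `Ψ`: a family of nonempty closed C-compact subsets of `X`
forming a π-network, hereditary with respect to (closed) C-compact subsets of its elements,
and maximal among families of nonempty sets inducing the same set-open topology. -/
structure MemPsi {X : Type*} [TopologicalSpace X] (lam : Set (Set X)) : Prop where
  nonempty : ∀ A ∈ lam, A.Nonempty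
  closed : ∀ A ∈ lam, IsClosed A
  ccompact : ∀ A ∈ lam, IsCCompact A
  piNetwork : ∀ U : Set X, IsOpen U → U.Nonempty → ∃ A ∈ lam, A ⊆ U
  hereditary : ∀ A ∈ lam, ∀ B : Set X, B ⊆ A → B.Nonempty → IsClosed B → IsCCompact B →
    B ∈ lam
  maximal : ∀ lam' : Set (Set X), (∀ A ∈ lam', A.Nonempty) →
    setOpenTopology lam' = setOpenTopology lam → lam' ⊆ lam

/-- A cozero (functional open) subset of `X`: the complement of a zero-set. -/
def IsCozero {X : Type*} [TopologicalSpace X] (U : Set X) : Prop :=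
  ∃ f : C(X, ℝ), U = {x | f x ≠ 0}

/-- `𝒰` is a `λ`-f-cover: a family of cozero sets, not containing `X`, such that every
member of `lam` is contained in some member of `𝒰`. -/
def IsFCover {X : Type*} [TopologicalSpace X] (lam : Set (Set X)) (𝒰 : Set (Set X)) : Prop :=
  (Set.univ : Set X) ∉ 𝒰 ∧ (∀ U ∈ 𝒰, IsCozero U) ∧ ∀ A ∈ lam, ∃ U ∈ 𝒰, A ⊆ U

/-- `Λ(λ)`: the collection of all `λ`-f-covers of `X`. -/
def fCovers {X : Type*} [TopologicalSpace X] (lam : Set (Set X)) : Set (Set (Set X)) :=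
  {𝒰 | IsFCover lam 𝒰}

/-- The selection principle `S₁(𝒜, ℬ)`. -/
def S1 {α : Type*} (𝒜 ℬ : Set (Set α)) : Prop :=
  ∀ A : ℕ → Set α, (∀ n, A n ∈ 𝒜) →
    ∃ b : ℕ → α, (∀ n, b n ∈ A n) ∧ Set.range b ∈ ℬ

/-- The selection principle `S_fin(𝒜, ℬ)`. -/
def Sfin {α : Type*} (𝒜 ℬ : Set (Set α)) : Prop :=
  ∀ A : ℕ → Set α, (∀ n, A n ∈ 𝒜) →
    ∃ B : ℕ → Set α, (∀ n, (B n).Finite ∧ B n ⊆ A n) ∧ (⋃ n, B n) ∈ ℬ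

/-- `Ω_y` with respect to the topology `t`: sets having `y` in their closure but not
containing `y`. -/
def OmegaPt {Y : Type*} (t : TopologicalSpace Y) (y : Y) : Set (Set Y) :=
  {A | y ∈ @closure Y t A ∧ y ∉ A}

/-- Countable `(t₁, t₂)`-tightness of a bitopological space. -/
def CountableBiTightness {Y : Type*} (t1 t2 : TopologicalSpace Y) : Prop :=
  ∀ A : Set Y, ∀ f ∈ @closure Y t1 A, ∃ B ⊆ A, B.Countable ∧ f ∈ @closure Y t2 B

/-- `X` is `λ`-`μ`-Lindelöf: every `λ`-f-cover has a countable subfamily which is a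
`μ`-f-cover. -/
def LamMuLindelof {X : Type*} [TopologicalSpace X] (lam mu : Set (Set X)) : Prop :=
  ∀ 𝒰 : Set (Set X), IsFCover lam 𝒰 → ∃ 𝒱 ⊆ 𝒰, 𝒱.Countable ∧ IsFCover mu 𝒱

/-- Countable `(t₁, t₂)`-T-tightness: for every uncountable regular cardinal `κ` and every
increasing `κ`-indexed sequence of `t₁`-closed sets, the union is `t₂`-closed. -/
def CountableBiTTightness {Y : Type*} (t1 t2 : TopologicalSpace Y) : Prop :=
  ∀ κ : Cardinal.{0}, Cardinal.aleph0 < κ → κ.IsRegular →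
    ∀ A : κ.ord.ToType → Set Y, Monotone A → (∀ α, @IsClosed Y t1 (A α)) →
      @IsClosed Y t2 (⋃ α, A α)

/-- `X` is separably `λ`-submetrizable: there is a continuous map of `X` onto a separable
metric space which is one-to-one on `⋃ lam`. -/
def SeparablyLamSubmetrizable (X : Type*) [TopologicalSpace X] (lam : Set (Set X)) : Prop :=
  ∃ (Y : Type) (m : MetricSpace Y),
    @SeparableSpace Y m.toPseudoMetricSpace.toUniformSpace.toTopologicalSpace ∧
    ∃ f : X → Y,
      @Continuous X Y _ m.toPseudoMetricSpace.toUniformSpace.toTopologicalSpace f ∧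
      Function.Surjective f ∧ Set.InjOn f (⋃₀ lam)

/-- `R`-separability for a pair of topologies: from every sequence of `t₁`-dense sets one
can pick single points forming a `t₂`-dense set. -/
def RSepBi {Y : Type*} (t1 t2 : TopologicalSpace Y) : Prop :=
  ∀ D : ℕ → Set Y, (∀ n, @Dense Y t1 (D n)) →
    ∃ d : ℕ → Y, (∀ n, d n ∈ D n) ∧ @Dense Y t2 (Set.range d)

/-- `M`-separability for a pair of topologies. -/
def MSepBi {Y : Type*} (t1 t2 : TopologicalSpace Y) : Prop :=
  ∀ D : ℕ → Set Y, (∀ n, @Dense Y t1 (D n)) →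
    ∃ F : ℕ → Set Y, (∀ n, (F n).Finite ∧ F n ⊆ D n) ∧ @Dense Y t2 (⋃ n, F n)

/-- `H`-separability for a pair of topologies. -/
def HSepBi {Y : Type*} (t1 t2 : TopologicalSpace Y) : Prop :=
  ∀ D : ℕ → Set Y, (∀ n, @Dense Y t1 (D n)) →
    ∃ F : ℕ → Set Y, (∀ n, (F n).Finite ∧ F n ⊆ D n) ∧
      ∀ G : Set Y, @IsOpen Y t2 G → G.Nonempty →
        ∀ᶠ n in Filter.atTop, (G ∩ F n).Nonempty

/-- A countable set `D` is groupable with respect to the topology `t`. -/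
def GroupableIn {Y : Type*} (t : TopologicalSpace Y) (D : Set Y) : Prop :=
  ∃ A : ℕ → Set Y, (∀ n, (A n).Finite) ∧ D = ⋃ n, A n ∧
    ∀ G : Set Y, @IsOpen Y t G → G.Nonempty →
      ∀ᶠ n in Filter.atTop, (G ∩ A n).Nonempty

/-- `GN`-separability for a pair of topologies. -/
def GNSepBi {Y : Type*} (t1 t2 : TopologicalSpace Y) : Prop :=
  ∀ D : ℕ → Set Y, (∀ n, @Dense Y t1 (D n)) →
    ∃ d : ℕ → Y, (∀ n, d n ∈ D n) ∧ @Dense Y t2 (Set.range d) ∧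
      GroupableIn t2 (Set.range d)

/-- The `(t₁, t₂)`-Pytkeev property for a bitopological space. -/
def PytkeevBi {Y : Type*} (t1 t2 : TopologicalSpace Y) : Prop :=
  ∀ A : Set Y, ∀ g ∈ @closure Y t1 A, g ∉ A →
    ∃ B : ℕ → Set Y, (∀ n, (B n).Infinite ∧ B n ⊆ A) ∧
      ∀ G ∈ @nhds Y t2 g, ∃ n, B n ⊆ G

/-- A groupable `μ`-f-cover. -/
def GroupableFCover {X : Type*} [TopologicalSpace X] (mu 𝒱 : Set (Set X)) : Prop :=
  𝒱.Countable ∧ IsFCover mu 𝒱 ∧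
    ∃ G : ℕ → Set (Set X), (∀ m, (G m).Finite) ∧
      (Pairwise fun m k => Disjoint (G m) (G k)) ∧ 𝒱 = ⋃ m, G m ∧
      ∀ F ∈ mu, ∀ᶠ m in Filter.atTop, ∃ U ∈ G m, F ⊆ U

/-!
A C-compact set has compact image under every continuous map to `ℝ × ℝ`, so its traces on
zero-sets are again C-compact. Subdividing `A ∈ λ` by small intervals of values of `g` therefore
shows that the `λ`-open topology is the topology of uniform convergence on the members of `λ`,
and since maximality makes `λ` closed under finite unions, the sets
`{f | ∀ x ∈ A, dist (f x) (g x) < ε}` with `A ∈ λ` form a neighbourhood base at `g`.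

Functions and covers are then exchanged through the cozero sets `{x | dist (f x) (g x) < ε}`.
Given covers `𝒰 n`, the functions at distance at least `1` from `g` outside some member of `𝒰 n`
accumulate at `g`, because a C-compact set is completely separated from the complement of a cozero
set containing it. Given sets `S n` accumulating at `g`, the sets `{x | dist (f x) (g x) < 1/(n+1)}`
with `f ∈ S n` cover `λ`. If `X` is one of them for infinitely many `n`, the corresponding `f`
converge uniformly to `g`; otherwise the selection principle applies, once to each tail of the
sequence so that every member of `λ` is covered at arbitrarily late stages.
-/

section SelectionPrinciple

variable {α : Type*} {𝒜 ℬ : Set (Set α)}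

lemma Sfin.exists_finite_subset_tail (h : Sfin 𝒜 ℬ) {A : ℕ → Set α} {k : ℕ}
    (hA : ∀ n ≥ k, A n ∈ 𝒜) :
    ∃ B : ℕ → Set α, (∀ n, (B n).Finite ∧ B n ⊆ A n) ∧ (⋃ n ≥ k, B n) ∈ ℬ := by
  obtain ⟨D, hD, hDℬ⟩ := h (fun m => A (m + k)) fun m => hA _ (Nat.le_add_left k m)
  refine ⟨fun n => {a | k ≤ n ∧ a ∈ D (n - k)}, fun n => ⟨?_, ?_⟩, ?_⟩
  · exact (hD (n - k)).1.subset fun _ ha => ha.2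
  · rintro a ⟨hkn, ha⟩
    simpa [Nat.sub_add_cancel hkn] using (hD (n - k)).2 ha
  · convert hDℬ using 1
    ext a
    simp only [mem_iUnion, mem_ofPred_eq]
    constructor
    · rintro ⟨n, -, -, ha⟩
      exact ⟨n - k, ha⟩
    · rintro ⟨m, ha⟩
      exact ⟨m + k, Nat.le_add_left k m, Nat.le_add_left k m, by simpa using ha⟩

lemma Sfin.exists_finite_subset_forall_tail (h : Sfin 𝒜 ℬ) {A : ℕ → Set α}
    (hA : ∀ᶠ n in atTop, A n ∈ 𝒜) :
    ∃ B : ℕ → Set α, (∀ n, (B n).Finite ∧ B n ⊆ A n) ∧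
      ∀ k, ∃ C ∈ ℬ, C ⊆ ⋃ n ≥ k, B n := by
  obtain ⟨N, hN⟩ := eventually_atTop.1 hA
  choose D hD hDℬ using fun k : ℕ =>
    h.exists_finite_subset_tail (k := max N k) fun n hn => hN n ((le_max_left N k).trans hn)
  refine ⟨fun n => ⋃ k ≤ n, D k n, fun n => ⟨?_, ?_⟩, fun k => ⟨_, hDℬ k, ?_⟩⟩
  · exact (finite_Iic n).biUnion fun k _ => (hD k n).1
  · exact iUnion₂_subset fun k _ => (hD k n).2
  · refine iUnion₂_subset fun n hn => ?_
    have hkn : k ≤ n := (le_max_right N k).trans hn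
    exact fun a ha => mem_iUnion₂.2 ⟨n, hkn, mem_iUnion₂.2 ⟨k, hkn, ha⟩⟩

lemma sfin_omegaPt_top (y : α) :
    Sfin (OmegaPt (⊤ : TopologicalSpace α) y) (OmegaPt ⊤ y) := by
  let _ : TopologicalSpace α := ⊤
  intro S hS
  have hne : ∀ n, (S n).Nonempty := fun n => closure_nonempty_iff.1 ⟨y, (hS n).1⟩
  choose f hf using hne
  refine ⟨fun n => {f n}, fun n => ⟨finite_singleton _, singleton_subset_iff.2 (hf n)⟩, ?_, ?_⟩
  · have hunion : (⋃ n, {f n}).Nonempty := ⟨f 0, mem_iUnion.2 ⟨0, rfl⟩⟩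
    exact (closure_indiscrete hunion).symm ▸ mem_univ y
  · intro hy
    obtain ⟨n, rfl⟩ := mem_iUnion.1 hy
    exact (hS n).2 (hf n)

end SelectionPrinciple

section UniformConvergence

variable {X Y : Type*} [TopologicalSpace X] {lam : Set (Set X)}

/-- The topology on `C(X, Y)` of uniform convergence on the members of `lam`, induced from
Mathlib's topology on `X →ᵤ[lam] Y`. It is not an instance, since `C(X, Y)` already
carries the compact-open topology. -/
abbrev uniformOnTopology [UniformSpace Y] (lam : Set (Set X)) : TopologicalSpace C(X, Y) :=
  TopologicalSpace.induced (fun f => UniformOnFun.ofFun lam f) inferInstance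

lemma le_uniformOnTopology_iff [UniformSpace Y] {t : TopologicalSpace C(X, Y)} :
    t ≤ uniformOnTopology lam ↔
      ∀ g : C(X, Y), ∀ A ∈ lam,
        TendstoUniformlyOn (fun f : C(X, Y) => ⇑f) g (@nhds _ t g) A := by
  rw [uniformOnTopology, ← continuous_iff_le_induced, continuous_iff_continuousAt]
  simp only [ContinuousAt, UniformOnFun.tendsto_iff_tendstoUniformlyOn]
  rfl

lemma mem_closure_uniformOnTopology_iff [PseudoMetricSpace Y] (hne : lam.Nonempty)
    (hdir : DirectedOn (· ⊆ ·) lam) {g : C(X, Y)} {S : Set C(X, Y)} :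
    g ∈ @closure _ (uniformOnTopology lam) S ↔
      ∀ A ∈ lam, ∀ ε > 0, ∃ f ∈ S, ∀ x ∈ A, dist (f x) (g x) < ε := by
  rw [uniformOnTopology, closure_induced, mem_closure_iff_nhds_basis
    (UniformOnFun.hasBasis_nhds_of_basis X Y lam _ hne hdir Metric.uniformity_basis_dist)]
  simp only [Prod.forall, and_imp, exists_mem_image]
  exact ⟨fun h A hA ε hε => h A ε hA hε, fun h A ε hA hε => h A hA ε hε⟩

end UniformConvergence

section CCompact

variable {X : Type*} [TopologicalSpace X] {A : Set X}

lemma IsCCompact.isClosed_image {Y : Type*} [MetricSpace Y] (hA : IsCCompact A) (φ : C(X, Y)) :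
    IsClosed (φ '' A) := by
  refine isClosed_of_closure_subset fun p hp => ?_
  let distToP : C(X, ℝ) := ⟨fun x => dist (φ x) p, by fun_prop⟩
  have h0 : (0 : ℝ) ∈ closure (distToP '' A) := by
    have := image_closure_subset_closure_image (f := (dist · p)) (by fun_prop)
      (mem_image_of_mem _ hp)
    rwa [dist_self, image_image] at this
  rw [(hA distToP).isClosed.closure_eq] at h0
  obtain ⟨x, hx, hxp⟩ := h0
  exact ⟨x, hx, dist_eq_zero.1 hxp⟩

lemma IsCCompact.isCompact_image_prodMk (hA : IsCCompact A) (f g : C(X, ℝ)) :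
    IsCompact (f.prodMk g '' A) := by
  refine ((hA f).prod (hA g)).of_isClosed_subset (hA.isClosed_image _) ?_
  rintro _ ⟨x, hx, rfl⟩
  exact ⟨mem_image_of_mem f hx, mem_image_of_mem g hx⟩

lemma IsCCompact.inter_preimage (hA : IsCCompact A) (g : C(X, ℝ)) {K : Set ℝ} (hK : IsClosed K) :
    IsCCompact (A ∩ g ⁻¹' K) := by
  intro f
  have himage : f '' (A ∩ g ⁻¹' K) = Prod.fst '' (f.prodMk g '' A ∩ Prod.snd ⁻¹' K) := by
    rw [← image_inter_preimage, image_image]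
    rfl
  rw [himage]
  exact ((hA.isCompact_image_prodMk f g).inter_right (hK.preimage continuous_snd)).image
    continuous_fst

lemma IsCCompact.exists_continuous_zero_one (hA : IsCCompact A) {U : Set X} (hU : IsCozero U)
    (hAU : A ⊆ U) : ∃ f : C(X, ℝ), EqOn f 0 A ∧ EqOn f 1 Uᶜ := by
  obtain ⟨h, rfl⟩ := hU
  have hdisj : Disjoint (h '' A) {0} := by
    rw [disjoint_singleton_right]
    rintro ⟨x, hx, hx0⟩
    exact hAU hx hx0
  obtain ⟨u, hu0, hu1, -⟩ :=
    exists_continuous_zero_one_of_isClosed (hA h).isClosed isClosed_singleton hdisj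
  exact ⟨u.comp h, fun x hx => hu0 (mem_image_of_mem h hx), fun x hx => hu1 (not_not.1 hx)⟩

lemma isCozero_setOf_lt (f g : C(X, ℝ)) : IsCozero {x | f x < g x} := by
  refine ⟨(g - f) ⊔ 0, ?_⟩
  ext x
  simp

end CCompact

section SetOpenTopology

variable {X : Type*} [TopologicalSpace X] {lam : Set (Set X)}

lemma isOpen_setOpenTopology {F : Set X} (hF : F ∈ lam) {U : Set ℝ} (hU : IsOpen U) :
    IsOpen[setOpenTopology lam] {f : C(X, ℝ) | f '' F ⊆ U} :=
  isOpen_generateFrom_of_mem ⟨F, hF, U, hU, rfl⟩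

lemma setOpenTopology_anti {mu : Set (Set X)} (h : lam ⊆ mu) :
    setOpenTopology mu ≤ setOpenTopology lam :=
  generateFrom_anti fun _ ⟨F, hF, hU⟩ => ⟨F, h hF, hU⟩

lemma setOpenTopology_empty : setOpenTopology (∅ : Set (Set X)) = ⊤ := by
  refine top_unique (le_generateFrom ?_)
  rintro _ ⟨F, hF, -⟩
  exact hF.elim

lemma setOpenTopology_insert_union {A B : Set X} (hA : A ∈ lam) (hB : B ∈ lam) :
    setOpenTopology (insert (A ∪ B) lam) = setOpenTopology lam := by
  let _ := setOpenTopology lam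
  refine le_antisymm (setOpenTopology_anti (subset_insert _ _)) (le_generateFrom ?_)
  rintro _ ⟨F, rfl | hF, U, hU, rfl⟩
  · simp only [image_union, union_subset_iff]
    exact (isOpen_setOpenTopology hA hU).inter (isOpen_setOpenTopology hB hU)
  · exact isOpen_setOpenTopology hF hU

/-- Heredity of a family with respect to traces on zero-sets, where the zero-sets are presented as
preimages of closed sets of reals. Empty traces are exempt because members of a family in `Ψ` are
nonempty. -/
def ZeroSetHereditary (lam : Set (Set X)) : Prop :=
  ∀ A ∈ lam, ∀ (g : C(X, ℝ)) (K : Set ℝ), IsClosed K → (A ∩ g ⁻¹' K).Nonempty → A ∩ g ⁻¹' K ∈ lam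

lemma uniformOnTopology_le_setOpenTopology (hcompact : ∀ A ∈ lam, IsCCompact A) :
    uniformOnTopology lam ≤ setOpenTopology lam := by
  let _ := uniformOnTopology (Y := ℝ) lam
  refine le_generateFrom ?_
  rintro _ ⟨F, hF, U, hU, rfl⟩
  refine isOpen_iff_eventually.2 fun g hg => ?_
  obtain ⟨δ, hδ, hδU⟩ := (hcompact F hF g).exists_thickening_subset_open hU hg
  have hclose := Metric.tendstoUniformlyOn_iff.1 (le_uniformOnTopology_iff.1 le_rfl g F hF) δ hδ
  filter_upwards [hclose] with f hf
  rintro _ ⟨x, hx, rfl⟩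
  exact hδU (Metric.mem_thickening_iff.2 ⟨g x, mem_image_of_mem g hx, dist_comm (g x) _ ▸ hf x hx⟩)

lemma setOpenTopology_le_uniformOnTopology (hcompact : ∀ A ∈ lam, IsCCompact A)
    (hhered : ZeroSetHereditary lam) : setOpenTopology lam ≤ uniformOnTopology lam := by
  let _ := setOpenTopology lam
  refine le_uniformOnTopology_iff.2 fun g A hA => Metric.tendstoUniformlyOn_iff.2 fun ε hε => ?_
  suffices hK : ∀ᶠ f in 𝓝 g, ∀ x ∈ A, g x ∈ g '' A → dist (g x) (f x) < ε by
    filter_upwards [hK] with f hf x hx using hf x hx (mem_image_of_mem g hx)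
  refine (hcompact A hA g).induction_on
    (p := fun K => ∀ᶠ f in 𝓝 g, ∀ x ∈ A, g x ∈ K → dist (g x) (f x) < ε) (by simp) ?_ ?_ ?_
  · intro K L hKL hL
    filter_upwards [hL] with f hf x hx hxK using hf x hx (hKL hxK)
  · intro K L hK hL
    filter_upwards [hK, hL] with f hfK hfL x hx hxKL using hxKL.elim (hfK x hx) (hfL x hx)
  · rintro _ ⟨a, ha, rfl⟩
    have htrace : A ∩ g ⁻¹' Metric.closedBall (g a) (ε / 3) ∈ lam :=
      hhered A hA g _ Metric.isClosed_closedBall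
        ⟨a, ha, Metric.mem_closedBall_self (by positivity)⟩
    have hg : g '' (A ∩ g ⁻¹' Metric.closedBall (g a) (ε / 3)) ⊆ Metric.ball (g a) (ε / 2) := by
      rintro _ ⟨x, ⟨-, hx⟩, rfl⟩
      exact Metric.closedBall_subset_ball (by linarith) hx
    refine ⟨Metric.closedBall (g a) (ε / 3),
      mem_nhdsWithin_of_mem_nhds (Metric.closedBall_mem_nhds _ (by positivity)), ?_⟩
    filter_upwards [(isOpen_setOpenTopology htrace Metric.isOpen_ball).mem_nhds hg]
      with f hf x hx hxa
    have hfx : dist (f x) (g a) < ε / 2 := hf (mem_image_of_mem f ⟨hx, hxa⟩)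
    have hgx : dist (g x) (g a) ≤ ε / 3 := hxa
    linarith [dist_triangle_right (g x) (f x) (g a)]

theorem setOpenTopology_eq_uniformOnTopology (hcompact : ∀ A ∈ lam, IsCCompact A)
    (hhered : ZeroSetHereditary lam) : setOpenTopology lam = uniformOnTopology lam :=
  (setOpenTopology_le_uniformOnTopology hcompact hhered).antisymm
    (uniformOnTopology_le_setOpenTopology hcompact)

lemma MemPsi.union_mem (h : MemPsi lam) {A B : Set X} (hA : A ∈ lam) (hB : B ∈ lam) :
    A ∪ B ∈ lam := by
  refine h.maximal (insert (A ∪ B) lam) ?_ (setOpenTopology_insert_union hA hB) (mem_insert _ _)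
  rintro C (rfl | hC)
  · exact (h.nonempty A hA).inl
  · exact h.nonempty C hC

lemma MemPsi.directedOn (h : MemPsi lam) : DirectedOn (· ⊆ ·) lam := fun A hA B hB =>
  ⟨A ∪ B, h.union_mem hA hB, subset_union_left, subset_union_right⟩

lemma MemPsi.zeroSetHereditary (h : MemPsi lam) : ZeroSetHereditary lam := fun A hA g _ hK hne =>
  h.hereditary A hA _ inter_subset_left hne ((h.closed A hA).inter (hK.preimage g.continuous))
    ((h.ccompact A hA).inter_preimage g hK)

end SetOpenTopology

section FanTightness

variable {X : Type*} [TopologicalSpace X] {lam : Set (Set X)}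

lemma sfin_fCovers_empty : Sfin (fCovers (∅ : Set (Set X))) (fCovers ∅) := fun _ _ =>
  ⟨fun _ => ∅, fun _ => ⟨finite_empty, empty_subset _⟩, by simp [fCovers, IsFCover]⟩

lemma isFCover_iUnion_of_subset {ι : Sort*} {𝒰 𝒱 : ι → Set (Set X)}
    (h𝒰 : ∀ i, IsFCover lam (𝒰 i)) (h𝒱 : ∀ i, 𝒱 i ⊆ 𝒰 i)
    (hcover : ∀ A ∈ lam, ∃ i, ∃ U ∈ 𝒱 i, A ⊆ U) : IsFCover lam (⋃ i, 𝒱 i) := by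
  refine ⟨fun huniv => ?_, fun U hU => ?_, fun A hA => ?_⟩
  · obtain ⟨i, hi⟩ := mem_iUnion.1 huniv
    exact (h𝒰 i).1 (h𝒱 i hi)
  · obtain ⟨i, hi⟩ := mem_iUnion.1 hU
    exact (h𝒰 i).2.1 U (h𝒱 i hi)
  · obtain ⟨i, U, hU, hAU⟩ := hcover A hA
    exact ⟨U, mem_iUnion.2 ⟨i, hU⟩, hAU⟩

lemma IsFCover.setOf_dist_lt_subset_mem_omegaPt {𝒰 : Set (Set X)} (h𝒰 : IsFCover lam 𝒰)
    (hne : lam.Nonempty) (hdir : DirectedOn (· ⊆ ·) lam) (hcompact : ∀ A ∈ lam, IsCCompact A)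
    (g : C(X, ℝ)) :
    {f : C(X, ℝ) | ∃ U ∈ 𝒰, {x | dist (f x) (g x) < 1} ⊆ U} ∈
      OmegaPt (uniformOnTopology lam) g := by
  refine ⟨(mem_closure_uniformOnTopology_iff hne hdir).2 fun A hA ε hε => ?_, ?_⟩
  · obtain ⟨U, hU, hAU⟩ := h𝒰.2.2 A hA
    obtain ⟨u, hu0, hu1⟩ := (hcompact A hA).exists_continuous_zero_one (h𝒰.2.1 U hU) hAU
    refine ⟨g + u, ⟨U, hU, fun x hx => ?_⟩, fun x hx => by simpa [hu0 hx] using hε⟩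
    by_contra hxU
    simp [hu1 hxU] at hx
  · rintro ⟨U, hU, hgU⟩
    have hU_univ : U = univ := by simpa using hgU
    exact h𝒰.1 (hU_univ ▸ hU)

theorem sfin_fCovers_of_sfin_omegaPt (hne : lam.Nonempty) (hdir : DirectedOn (· ⊆ ·) lam)
    (hcompact : ∀ A ∈ lam, IsCCompact A) {g : C(X, ℝ)}
    (h : Sfin (OmegaPt (uniformOnTopology lam) g) (OmegaPt (uniformOnTopology lam) g)) :
    Sfin (fCovers lam) (fCovers lam) := by
  intro 𝒰 h𝒰
  obtain ⟨B, hB, hgB, -⟩ :=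
    h _ fun n => (h𝒰 n).setOf_dist_lt_subset_mem_omegaPt hne hdir hcompact g
  have hU : ∀ n, ∀ f ∈ B n, ∃ U ∈ 𝒰 n, {x | dist (f x) (g x) < 1} ⊆ U := fun n _ hf => (hB n).2 hf
  choose! V hV𝒰 hV using hU
  have hsub : ∀ n, V n '' B n ⊆ 𝒰 n := fun n => image_subset_iff.2 (hV𝒰 n)
  refine ⟨fun n => V n '' B n, fun n => ⟨(hB n).1.image _, hsub n⟩,
    isFCover_iUnion_of_subset h𝒰 hsub fun A hA => ?_⟩
  obtain ⟨f, hf, hfA⟩ := (mem_closure_uniformOnTopology_iff hne hdir).1 hgB A hA 1 one_pos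
  obtain ⟨n, hn⟩ := mem_iUnion.1 hf
  exact ⟨n, V n f, mem_image_of_mem _ hn, fun x hx => hV n f hn (hfA x hx)⟩

lemma Sfin.exists_finite_subset_frequently_cover (h : Sfin (fCovers lam) (fCovers lam))
    {𝒰 : ℕ → Set (Set X)} (hcozero : ∀ n, ∀ U ∈ 𝒰 n, IsCozero U)
    (hcover : ∀ n, ∀ A ∈ lam, ∃ U ∈ 𝒰 n, A ⊆ U) :
    ∃ 𝒱 : ℕ → Set (Set X), (∀ n, (𝒱 n).Finite ∧ 𝒱 n ⊆ 𝒰 n) ∧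
      ∀ A ∈ lam, ∃ᶠ n in atTop, ∃ U ∈ 𝒱 n, A ⊆ U := by
  by_cases huniv : ∃ᶠ n in atTop, univ ∈ 𝒰 n
  · refine ⟨fun n => 𝒰 n ∩ {univ}, fun n => ⟨(finite_singleton _).inter_of_right _,
      inter_subset_left⟩, fun A _ => ?_⟩
    exact huniv.mono fun n hn => ⟨univ, ⟨hn, rfl⟩, subset_univ A⟩
  · have hfCover : ∀ᶠ n in atTop, 𝒰 n ∈ fCovers lam :=
      (not_frequently.1 huniv).mono fun n hn => ⟨hn, hcozero n, hcover n⟩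
    obtain ⟨𝒱, h𝒱, htail⟩ := h.exists_finite_subset_forall_tail hfCover
    refine ⟨𝒱, h𝒱, fun A hA => frequently_atTop.2 fun k => ?_⟩
    obtain ⟨𝒲, h𝒲, h𝒲𝒱⟩ := htail k
    obtain ⟨U, hU, hAU⟩ := h𝒲.2.2 A hA
    obtain ⟨n, hkn, hn⟩ := mem_iUnion₂.1 (h𝒲𝒱 hU)
    exact ⟨n, hkn, U, hn, hAU⟩

theorem sfin_omegaPt_of_sfin_fCovers (hne : lam.Nonempty) (hdir : DirectedOn (· ⊆ ·) lam)
    (h : Sfin (fCovers lam) (fCovers lam)) (g : C(X, ℝ)) :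
    Sfin (OmegaPt (uniformOnTopology lam) g) (OmegaPt (uniformOnTopology lam) g) := by
  intro S hS
  let W : ℕ → C(X, ℝ) → Set X := fun n f => {x | dist (f x) (g x) < 1 / (n + 1)}
  have hcozero : ∀ n, ∀ U ∈ W n '' S n, IsCozero U := by
    rintro n _ ⟨f, -, rfl⟩
    exact isCozero_setOf_lt ⟨fun x => dist (f x) (g x), by fun_prop⟩ (.const X (1 / (n + 1)))
  have hcover : ∀ n, ∀ A ∈ lam, ∃ U ∈ W n '' S n, A ⊆ U := by
    intro n A hA
    obtain ⟨f, hf, hfA⟩ := (mem_closure_uniformOnTopology_iff hne hdir).1 (hS n).1 A hA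
      (1 / (n + 1)) Nat.one_div_pos_of_nat
    exact ⟨W n f, mem_image_of_mem _ hf, hfA⟩
  obtain ⟨𝒱, h𝒱, hfreq⟩ := h.exists_finite_subset_frequently_cover hcozero hcover
  have hW : ∀ n, ∀ U ∈ 𝒱 n, ∃ f ∈ S n, W n f = U := fun n _ hU => (h𝒱 n).2 hU
  choose! F hFS hF using hW
  have hsub : ∀ n, F n '' 𝒱 n ⊆ S n := fun n => image_subset_iff.2 (hFS n)
  refine ⟨fun n => F n '' 𝒱 n, fun n => ⟨(h𝒱 n).1.image _, hsub n⟩,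
    (mem_closure_uniformOnTopology_iff hne hdir).2 fun A hA ε hε => ?_, fun hg => ?_⟩
  · obtain ⟨k, hk⟩ := exists_nat_one_div_lt hε
    obtain ⟨n, hkn, U, hU, hAU⟩ := frequently_atTop.1 (hfreq A hA) k
    refine ⟨F n U, mem_iUnion.2 ⟨n, mem_image_of_mem _ hU⟩, fun x hx => ?_⟩
    have hxW : x ∈ W n (F n U) := (hF n U hU).symm ▸ hAU hx
    exact (hxW.trans_le (Nat.one_div_le_one_div hkn)).trans hk
  · obtain ⟨n, hn⟩ := mem_iUnion.1 hg
    exact (hS n).2 (hsub n hn)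

theorem fanTightness_iff_sfin_fCovers_general (hcompact : ∀ A ∈ lam, IsCCompact A)
    (hdir : DirectedOn (· ⊆ ·) lam) (hhered : ZeroSetHereditary lam) (g : C(X, ℝ)) :
    Sfin (OmegaPt (setOpenTopology lam) g) (OmegaPt (setOpenTopology lam) g) ↔
      Sfin (fCovers lam) (fCovers lam) := by
  rcases lam.eq_empty_or_nonempty with rfl | hne
  · rw [setOpenTopology_empty]
    exact iff_of_true (sfin_omegaPt_top g) sfin_fCovers_empty
  · rw [setOpenTopology_eq_uniformOnTopology hcompact hhered]
    exact ⟨sfin_fCovers_of_sfin_omegaPt hne hdir hcompact,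
      fun h => sfin_omegaPt_of_sfin_fCovers hne hdir h g⟩

end FanTightness

/-- For a Tychonoff space `X` and `λ ∈ Ψ`, `C_λ(X)` has countable fan
tightness iff `X` has property `S_fin(Λ(λ), Λ(λ))`. -/
theorem fanTightness_iff_sfin_fCovers
    {X : Type*} [TopologicalSpace X] [T35Space X]
    (lam : Set (Set X)) (hlam : MemPsi lam) :
    (∀ g : C(X, ℝ),
        Sfin (OmegaPt (setOpenTopology lam) g) (OmegaPt (setOpenTopology lam) g)) ↔
      Sfin (fCovers lam) (fCovers lam) := by
  have hpoint :=
    fanTightness_iff_sfin_fCovers_general hlam.ccompact hlam.directedOn hlam.zeroSetHereditary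
  exact ⟨fun h => (hpoint 0).1 (h 0), fun h g => (hpoint g).2 h⟩
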